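/- arXiv:0903.0648 — 2 statements merged into one kernel-verified Lean document; each statement's English description precedes it below -/
import Mathlib

section
/- In the free metabelian group M₂ of rank 2 with free generators x, y, the subgroup H = ⟨xᵐ, y⟩ (for m > 0) is free metabelian of rank 2, its image in the abelianization M₂/[M₂,M₂] ≅ ℤ × ℤ is mℤ × ℤ, and [H,H] = [M₂,M₂] ∩ H. -/
namespace Stmt14

/-- The free group of rank 2. -/
abbrev F2 := FreeGroup (Fin 2)

/-- The free metabelian group of rank 2: the quotient of the free group of
rank 2 by its second derived subgroup. -/
abbrev M2 := F2 ⧸ (⁅commutator F2, commutator F2⁆ : Subgroup F2)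

/-- The first free generator of `M2`. -/
def x : M2 := QuotientGroup.mk (FreeGroup.of 0)

/-- The second free generator of `M2`. -/
def y : M2 := QuotientGroup.mk (FreeGroup.of 1)

/-- The subgroup `mℤ × ℤ` of `ℤ × ℤ`. -/
def Amod (m : ℕ) : AddSubgroup (ℤ × ℤ) where
  carrier := {p | (m : ℤ) ∣ p.1}
  zero_mem' := dvd_zero _
  add_mem' := fun ha hb => dvd_add ha hb
  neg_mem' := fun {p} hp => by simpa using hp.neg_right

open AddMonoidAlgebra Multiplicative
open scoped commutatorElement

section Generation

variable {G : Type*} [Group G]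

/-- If `a` and `b` generate `G`, the commutator subgroup lies in the normal closure of `⁅a, b⁆`. -/
theorem commutator_le_normalClosure {a b : G} (hab : Subgroup.closure {a, b} = ⊤) :
    commutator G ≤ Subgroup.normalClosure {⁅a, b⁆} := by
  set N := Subgroup.normalClosure {⁅a, b⁆}
  let π := QuotientGroup.mk' N
  have hcomm : π a * π b = π b * π a := by
    rw [← commutatorElement_eq_one_iff_mul_comm, ← map_commutatorElement]
    exact (QuotientGroup.eq_one_iff _).2 (Subgroup.subset_normalClosure rfl)
  have htop : Subgroup.closure {π a, π b} = ⊤ := by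
    rw [← Set.image_pair, ← MonoidHom.map_closure, hab, ← MonoidHom.range_eq_map]
    exact MonoidHom.range_eq_top.2 (QuotientGroup.mk'_surjective N)
  have hmul : IsMulCommutative (Subgroup.closure {π a, π b}) := by
    refine Subgroup.isMulCommutative_closure ?_
    rintro u (rfl | rfl) v (rfl | rfl)
    exacts [rfl, hcomm, hcomm.symm, rfl]
  refine Subgroup.Normal.quotient_commutative_iff_commutator_le.1 ⟨⟨fun u v => ?_⟩⟩
  rw [htop] at hmul
  exact congrArg Subtype.val
    (mul_comm' (⟨u, Subgroup.mem_top u⟩ : (⊤ : Subgroup (G ⧸ N))) ⟨v, Subgroup.mem_top v⟩)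

/-- The commutator subgroup of a metabelian group on two generators `a`, `b` with abelianization
`ℤ × ℤ` is a cyclic `ℤ[ℤ × ℤ]`-module generated by `⁅a, b⁆`. -/
theorem exists_range_eq_commutator {a b : G} (hab : Subgroup.closure {a, b} = ⊤)
    (hG : ⁅commutator G, commutator G⁆ = ⊥)
    (φ : G →* Multiplicative (ℤ × ℤ)) (ha : φ a = ofAdd (1, 0)) (hb : φ b = ofAdd (0, 1))
    (hker : φ.ker = commutator G) :
    ∃ Λ : Multiplicative (AddMonoidAlgebra ℤ (ℤ × ℤ)) →* G, Λ.range = commutator G ∧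
      ∀ p : ℤ × ℤ, Λ (ofAdd (single p 1)) =
        (a ^ p.1 * b ^ p.2) * ⁅a, b⁆ * (a ^ p.1 * b ^ p.2)⁻¹ := by
  have hcomm : ∀ u ∈ commutator G, ∀ v ∈ commutator G, u * v = v * u := fun u hu v hv =>
    Subgroup.mem_centralizer_iff.1
      (Subgroup.commutator_eq_bot_iff_le_centralizer.1 hG hv) u hu
  have hc : ⁅a, b⁆ ∈ commutator G :=
    Subgroup.commutator_mem_commutator (Subgroup.mem_top a) (Subgroup.mem_top b)
  have hconj (g : G) : g * ⁅a, b⁆ * g⁻¹ ∈ commutator G :=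
    (inferInstance : (commutator G).Normal).conj_mem _ hc g
  let _ : CommGroup (commutator G) :=
    { (inferInstance : Group (commutator G)) with
      mul_comm := fun u v => Subtype.ext (hcomm u u.2 v v.2) }
  let F : ℤ × ℤ → ℤ →+ Additive (commutator G) := fun p =>
    zmultiplesHom _ (Additive.ofMul
      ⟨(a ^ p.1 * b ^ p.2) * ⁅a, b⁆ * (a ^ p.1 * b ^ p.2)⁻¹, hconj _⟩)
  let L : AddMonoidAlgebra ℤ (ℤ × ℤ) →+ Additive (commutator G) :=
    (Finsupp.liftAddHom F).comp coeffAddEquiv.toAddMonoidHom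
  let Λ : Multiplicative (AddMonoidAlgebra ℤ (ℤ × ℤ)) →* G :=
    (commutator G).subtype.comp (AddMonoidHom.toMultiplicativeLeft L)
  have hΛ (p : ℤ × ℤ) : Λ (ofAdd (single p 1)) =
      (a ^ p.1 * b ^ p.2) * ⁅a, b⁆ * (a ^ p.1 * b ^ p.2)⁻¹ := by
    simp [Λ, L, F]
  refine ⟨Λ, le_antisymm ?_ ?_, hΛ⟩
  · rintro _ ⟨r, rfl⟩
    exact (Additive.toMul (L (toAdd r))).2
  · refine (commutator_le_normalClosure hab).trans ((Subgroup.closure_le _).2 ?_)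
    intro u hu
    obtain ⟨_, rfl, hu⟩ := Group.mem_conjugatesOfSet_iff.1 hu
    obtain ⟨g, rfl⟩ := isConj_iff.1 hu
    refine ⟨ofAdd (single (toAdd (φ g)) 1), ?_⟩
    rw [hΛ]
    set e := a ^ (toAdd (φ g)).1 * b ^ (toAdd (φ g)).2 with he
    have hφe : φ e = φ g := by
      apply toAdd.injective
      simp [he, ha, hb]
    have hk : e⁻¹ * g ∈ commutator G := by
      rw [← hker, MonoidHom.mem_ker]
      simp [hφe]
    have h := hcomm _ hk _ hc
    calc e * ⁅a, b⁆ * e⁻¹ = e * (⁅a, b⁆ * (e⁻¹ * g)) * g⁻¹ := by group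
      _ = e * ((e⁻¹ * g) * ⁅a, b⁆) * g⁻¹ := by rw [h]
      _ = g * ⁅a, b⁆ * g⁻¹ := by group

end Generation

/-- The action of `ℤ × ℤ` on its integral group ring by multiplication by monomials. -/
noncomputable def monomialAction :
    Multiplicative (ℤ × ℤ) →* MulAut (Multiplicative (AddMonoidAlgebra ℤ (ℤ × ℤ))) :=
  (MulAutMultiplicative _).symm.toMonoidHom.comp <|
    (DistribMulAction.toAddAut (AddMonoidAlgebra ℤ (ℤ × ℤ))ˣ _).comp
      (of ℤ (ℤ × ℤ)).toHomUnits

theorem monomialAction_apply (p : Multiplicative (ℤ × ℤ))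
    (f : Multiplicative (AddMonoidAlgebra ℤ (ℤ × ℤ))) :
    monomialAction p f = ofAdd (single (toAdd p) 1 * toAdd f) := rfl

/-- The wreath product `ℤ ≀ (ℤ × ℤ)`, the target of the Magnus embedding. -/
abbrev Magnus := Multiplicative (AddMonoidAlgebra ℤ (ℤ × ℤ)) ⋊[monomialAction]
  Multiplicative (ℤ × ℤ)

theorem Magnus.conj_inl (g : Magnus) (f : Multiplicative (AddMonoidAlgebra ℤ (ℤ × ℤ))) :
    g * SemidirectProduct.inl f * g⁻¹ = SemidirectProduct.inl (monomialAction g.right f) := by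
  ext1
  · simp [mul_comm]
  · simp

theorem Magnus.commutator_commutator : ⁅commutator Magnus, commutator Magnus⁆ = ⊥ := by
  have h : commutator Magnus ≤ (SemidirectProduct.inl : _ →* Magnus).range := by
    rw [SemidirectProduct.range_inl_eq_ker_rightHom]
    exact Abelianization.commutator_subset_ker _
  rw [eq_bot_iff]
  refine (Subgroup.commutator_mono h h).trans (Subgroup.commutator_le.2 ?_)
  rintro _ ⟨u, rfl⟩ _ ⟨v, rfl⟩
  rw [← map_commutatorElement, commutatorElement_eq_one_iff_mul_comm.2 (mul_comm u v), map_one]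
  exact one_mem _

/-- The universal property of `M2` for metabelian groups. -/
noncomputable def M2.lift {G : Type*} [Group G] (hG : ⁅commutator G, commutator G⁆ = ⊥)
    (a b : G) : M2 →* G :=
  QuotientGroup.lift _ (FreeGroup.lift ![a, b]) <| by
    have h : (commutator F2).map (FreeGroup.lift ![a, b]) ≤ commutator G := by
      rw [commutator_def, Subgroup.map_commutator]
      exact Subgroup.commutator_mono le_top le_top
    rw [← Subgroup.map_eq_bot_iff, Subgroup.map_commutator, eq_bot_iff]
    exact (Subgroup.commutator_mono h h).trans hG.le

@[simp]
theorem M2.lift_x {G : Type*} [Group G] (hG : ⁅commutator G, commutator G⁆ = ⊥) (a b : G) :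
    M2.lift hG a b x = a := by
  simp [M2.lift, x]

@[simp]
theorem M2.lift_y {G : Type*} [Group G] (hG : ⁅commutator G, commutator G⁆ = ⊥) (a b : G) :
    M2.lift hG a b y = b := by
  simp [M2.lift, y]

theorem M2.closure_x_y : Subgroup.closure {x, y} = (⊤ : Subgroup M2) := by
  have h : ({x, y} : Set M2) = QuotientGroup.mk' _ '' Set.range FreeGroup.of := by
    rw [← Set.range_comp]
    ext g
    simp [Fin.exists_fin_two, x, y, eq_comm]
  rw [h, ← MonoidHom.map_closure, FreeGroup.closure_range_of, ← MonoidHom.range_eq_map]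
  exact MonoidHom.range_eq_top.2 (QuotientGroup.mk'_surjective _)

theorem M2.commutator_commutator : ⁅commutator M2, commutator M2⁆ = ⊥ := by
  have h : commutator M2 = (commutator F2).map (QuotientGroup.mk' _) := by
    change _ = Subgroup.map _ ⁅⊤, ⊤⁆
    rw [Subgroup.map_commutator,
      Subgroup.map_top_of_surjective _ (QuotientGroup.mk'_surjective _), commutator_def M2]
  rw [h, ← Subgroup.map_commutator, eq_bot_iff, Subgroup.map_le_iff_le_comap]
  exact fun g hg => (QuotientGroup.eq_one_iff g).2 hg

theorem M2.hom_ext {G : Type*} [Group G] {f g : M2 →* G} (h₁ : f x = g x) (h₂ : f y = g y) :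
    f = g :=
  MonoidHom.eq_of_eqOn_dense M2.closure_x_y <| by
    rintro _ (rfl | rfl)
    exacts [h₁, h₂]

/-- The Magnus embedding of `M2`. -/
noncomputable def magnusHom : M2 →* Magnus :=
  M2.lift Magnus.commutator_commutator (SemidirectProduct.inr (ofAdd (1, 0)))
    (SemidirectProduct.inl (ofAdd 1) * SemidirectProduct.inr (ofAdd (0, 1)))

/-- The endomorphism of `M2` with `x ↦ x ^ m` and `y ↦ y`. -/
noncomputable def powHom (m : ℕ) : M2 →* M2 :=
  M2.lift M2.commutator_commutator (x ^ m) y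

/-- Multiplication by `m` in the first coordinate of `ℤ × ℤ`. -/
def scaleFst (m : ℕ) : ℤ × ℤ →+ ℤ × ℤ :=
  (AddMonoidHom.mulLeft (m : ℤ)).prodMap (AddMonoidHom.id ℤ)

theorem scaleFst_apply (m : ℕ) (p : ℤ × ℤ) : scaleFst m p = (m * p.1, p.2) := rfl

theorem scaleFst_injective {m : ℕ} (hm : 0 < m) : Function.Injective (scaleFst m) := by
  rintro ⟨p, q⟩ ⟨p', q'⟩ h
  simpa [scaleFst_apply, hm.ne'] using h

theorem range_powHom (m : ℕ) : (powHom m).range = Subgroup.closure {x ^ m, y} := by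
  rw [MonoidHom.range_eq_map, ← M2.closure_x_y, MonoidHom.map_closure, Set.image_pair]
  simp [powHom]

theorem abelianization_powHom (m : ℕ) {φ : M2 →* Multiplicative (ℤ × ℤ)}
    (hx : φ x = ofAdd (1, 0)) (hy : φ y = ofAdd (0, 1)) (g : M2) :
    φ (powHom m g) = ofAdd (scaleFst m (toAdd (φ g))) := by
  have h : φ.comp (powHom m) = (AddMonoidHom.toMultiplicative (scaleFst m)).comp φ := by
    apply M2.hom_ext
    · simp [powHom, hx, scaleFst_apply, ← ofAdd_nsmul]
    · simp [powHom, hy, scaleFst_apply]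
  exact DFunLike.congr_fun h g

theorem magnusHom_right {φ : M2 →* Multiplicative (ℤ × ℤ)}
    (hx : φ x = ofAdd (1, 0)) (hy : φ y = ofAdd (0, 1)) (g : M2) :
    (magnusHom g).right = φ g := by
  have h : SemidirectProduct.rightHom.comp magnusHom = φ := by
    apply M2.hom_ext
    · simp [magnusHom, hx]
    · simp [magnusHom, hy]
  exact DFunLike.congr_fun h g

theorem magnusHom_powHom_commutator (m : ℕ) :
    magnusHom (powHom m ⁅x, y⁆) =
      SemidirectProduct.inl (ofAdd (single ((m : ℤ), (0 : ℤ)) 1 - 1)) := by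
  have h : magnusHom (powHom m ⁅x, y⁆) =
      (SemidirectProduct.inr (ofAdd ((1 : ℤ), (0 : ℤ)) ^ m) * SemidirectProduct.inl (ofAdd 1) *
        (SemidirectProduct.inr (ofAdd ((1 : ℤ), (0 : ℤ)) ^ m))⁻¹) *
        (SemidirectProduct.inl (ofAdd 1))⁻¹ := by
    simp only [map_commutatorElement, powHom, magnusHom, M2.lift_x, M2.lift_y, map_pow]
    rw [commutatorElement_def]
    have hc : (SemidirectProduct.inr (ofAdd ((0 : ℤ), (1 : ℤ))) : Magnus) *
        (SemidirectProduct.inr (ofAdd ((1 : ℤ), (0 : ℤ))) ^ m)⁻¹ =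
        (SemidirectProduct.inr (ofAdd ((1 : ℤ), (0 : ℤ))) ^ m)⁻¹ *
        SemidirectProduct.inr (ofAdd ((0 : ℤ), (1 : ℤ))) := by
      simp only [← map_pow, ← map_inv, ← map_mul, mul_comm]
    rw [mul_inv_rev, mul_assoc _ _ (_ ^ m)⁻¹, mul_assoc _ _ (_ ^ m)⁻¹, hc]
    group
  rw [h, Magnus.conj_inl, ← map_inv, ← map_mul, monomialAction_apply, SemidirectProduct.right_inr,
    toAdd_ofAdd, mul_one, ← ofAdd_neg, ← ofAdd_add, ← sub_eq_add_neg]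
  simp [← ofAdd_nsmul]

theorem powHom_injective {m : ℕ} (hm : 0 < m) {φ : M2 →* Multiplicative (ℤ × ℤ)}
    (hx : φ x = ofAdd (1, 0)) (hy : φ y = ofAdd (0, 1)) (hker : φ.ker = commutator M2) :
    Function.Injective (powHom m) := by
  rw [injective_iff_map_eq_one]
  intro g hg
  obtain ⟨Λ, hrange, hΛ⟩ := exists_range_eq_commutator M2.closure_x_y M2.commutator_commutator
    φ hx hy hker
  have hφg : φ g = 1 := by
    have h := abelianization_powHom m hx hy g
    rw [hg, map_one, eq_comm, ofAdd_eq_one, ← map_zero (scaleFst m)] at h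
    exact scaleFst_injective hm h
  obtain ⟨r, rfl⟩ : g ∈ Λ.range := by rw [hrange, ← hker]; exact hφg
  set w : AddMonoidAlgebra ℤ (ℤ × ℤ) := single ((m : ℤ), (0 : ℤ)) 1 - 1 with hw
  have hw0 : w ≠ 0 := by
    rw [hw, sub_ne_zero, one_def]
    intro h
    have := congrArg (fun f => coeff f ((m : ℤ), (0 : ℤ))) h
    simp [hm.ne'] at this
  let E : AddMonoidAlgebra ℤ (ℤ × ℤ) →+ AddMonoidAlgebra ℤ (ℤ × ℤ) :=
    (AddMonoidHom.mulRight w).comp (mapDomainRingHom ℤ (scaleFst m)).toAddMonoidHom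
  have key : (magnusHom.comp (powHom m)).comp Λ =
      SemidirectProduct.inl.comp (AddMonoidHom.toMultiplicative E) := by
    apply MonoidHom.toAdditive.injective
    refine addHom_ext' fun p => AddMonoidHom.ext_int ?_
    apply Additive.toMul.injective
    change magnusHom (powHom m (Λ (ofAdd (single p 1)))) =
      SemidirectProduct.inl (ofAdd (mapDomain (scaleFst m) (single p 1) * w))
    rw [hΛ, map_mul, map_mul, map_mul, map_mul, magnusHom_powHom_commutator, map_inv, map_inv,
      Magnus.conj_inl, magnusHom_right hx hy, abelianization_powHom m hx hy, monomialAction_apply,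
      mapDomain_single]
    simp [hx, hy, hw]
  have h := DFunLike.congr_fun key r
  have hE : ofAdd (E (toAdd r)) = 1 := by
    simp only [MonoidHom.comp_apply, hg, map_one] at h
    exact SemidirectProduct.inl_injective (h.symm.trans (map_one SemidirectProduct.inl).symm)
  have hr : mapDomain (scaleFst m) (toAdd r) = 0 :=
    (mul_eq_zero.1 (show mapDomain (scaleFst m) (toAdd r) * w = 0 from ofAdd_eq_one.1 hE)).resolve_right hw0
  have hr0 : toAdd r = 0 :=
    mapDomain_injective (scaleFst_injective hm) (hr.trans (mapDomain_zero _).symm)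
  rw [toAdd_eq_zero.1 hr0, map_one]

/-- In the free metabelian group `M₂` of rank 2, for `m > 0` the subgroup
`H = ⟨xᵐ, y⟩` is free metabelian of rank 2, its image under the abelianization
map `φ : M₂ → ℤ × ℤ` (with `φ x = (1,0)`, `φ y = (0,1)`, `ker φ = [M₂,M₂]`)
is `mℤ × ℤ`, and `[H,H] = [M₂,M₂] ∩ H`. -/
theorem stmt14 (m : ℕ) (hm : 0 < m)
    (φ : M2 →* Multiplicative (ℤ × ℤ))
    (hx : φ x = Multiplicative.ofAdd ((1 : ℤ), (0 : ℤ)))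
    (hy : φ y = Multiplicative.ofAdd ((0 : ℤ), (1 : ℤ)))
    (hker : φ.ker = commutator M2) :
    let H : Subgroup M2 := Subgroup.closure {x ^ m, y}
    Nonempty (H ≃* M2) ∧
    H.map φ = AddSubgroup.toSubgroup (Amod m) ∧
    ⁅H, H⁆ = commutator M2 ⊓ H := by
  intro H
  have hH : (powHom m).range = H := range_powHom m
  refine ⟨?_, ?_, ?_⟩
  · rw [← hH]
    exact ⟨(MonoidHom.ofInjective (powHom_injective hm hx hy hker)).symm⟩
  · rw [← hH]
    ext p
    constructor
    · rintro ⟨_, ⟨g, rfl⟩, rfl⟩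
      rw [abelianization_powHom m hx hy]
      exact dvd_mul_right _ _
    · rintro ⟨k, hk⟩
      refine ⟨powHom m (x ^ k * y ^ (toAdd p).2), ⟨_, rfl⟩, ?_⟩
      rw [abelianization_powHom m hx hy]
      apply toAdd.injective
      ext
      · simpa [scaleFst_apply, hx, hy] using hk.symm
      · simp [scaleFst_apply, hx, hy]
  · have hcomm : ⁅H, H⁆ = (commutator M2).map (powHom m) := by
      rw [← hH, MonoidHom.range_eq_map, ← Subgroup.map_commutator, commutator_def M2]
    refine le_antisymm (le_inf (Subgroup.commutator_mono le_top le_top) ?_) ?_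
    · rw [hcomm, ← hH, MonoidHom.range_eq_map]
      exact Subgroup.map_mono le_top
    · rintro _ ⟨hg, hgH⟩
      rw [← hH] at hgH
      obtain ⟨g, rfl⟩ := hgH
      rw [hcomm]
      refine ⟨g, ?_, rfl⟩
      rw [← hker] at hg ⊢
      change φ _ = 1 at hg ⊢
      rw [abelianization_powHom m hx hy, ofAdd_eq_one, ← map_zero (scaleFst m)] at hg
      exact scaleFst_injective hm hg

end Stmt14
end

section
/- A word w over {x, x⁻¹, y, y⁻¹} represents the identity element of the free metabelian group of rank 2 on generators x, y if and only if the path traced by w in the Cayley graph of ℤ × ℤ (starting at the origin, with x and y moving one step in the two coordinate directions) is closed and traverses each edge of the graph a net total of zero times (counting reverse traversals negatively). -/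
namespace Stmt15

/-- The free group of rank 2. -/
abbrev F2 := FreeGroup (Fin 2)

/-- The free metabelian group of rank 2: the quotient of the free group of
rank 2 by its second derived subgroup. -/
abbrev M2 := F2 ⧸ (⁅commutator F2, commutator F2⁆ : Subgroup F2)

/-- The unit step in the `i`-th coordinate direction of `ℤ × ℤ`
(`x` moves by `(1,0)`, `y` by `(0,1)`). -/
def vec : Fin 2 → ℤ × ℤ := fun i => if i = 0 then (1, 0) else (0, 1)

/-- The displacement effected by a single letter `(i, b)` (`b = true` means the
generator, `b = false` its inverse). -/
def disp (l : Fin 2 × Bool) : ℤ × ℤ := if l.2 then vec l.1 else -vec l.1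

/-- The endpoint of the path traced by a word starting at the origin. -/
def endpt (w : List (Fin 2 × Bool)) : ℤ × ℤ := (w.map disp).sum

/-- `trav w p e` is the net number of times (forward minus backward) that the
path traced by the word `w`, starting at `p`, traverses the edge `e`; an edge
is encoded as `(v, i)`, joining `v` to `v + vec i`. -/
def trav : List (Fin 2 × Bool) → ℤ × ℤ → (ℤ × ℤ) × Fin 2 → ℤ
  | [], _, _ => 0
  | l :: rest, p, e =>
      (if e = ((if l.2 then p else p + disp l), l.1) then (if l.2 then (1 : ℤ) else -1) else 0)
        + trav rest (p + disp l) e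

/-- The free abelian group of functions on the edges of the lattice, written multiplicatively. -/
abbrev Flow := Multiplicative ((ℤ × ℤ) × Fin 2 → ℤ)

/-- Translation of flows by lattice vectors. -/
def shift : Multiplicative (ℤ × ℤ) →* MulAut Flow where
  toFun v :=
    { toFun := fun f => Multiplicative.ofAdd fun e => f.toAdd (e.1 - v.toAdd, e.2)
      invFun := fun f => Multiplicative.ofAdd fun e => f.toAdd (e.1 + v.toAdd, e.2)
      left_inv := fun f => by
        apply Multiplicative.toAdd.injective
        funext e
        simp
      right_inv := fun f => by
        apply Multiplicative.toAdd.injective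
        funext e
        simp
      map_mul' := fun _ _ => rfl }
  map_one' := by
    refine MulEquiv.ext fun f => Multiplicative.toAdd.injective (funext fun e => ?_)
    simp
  map_mul' u v := by
    refine MulEquiv.ext fun f => Multiplicative.toAdd.injective (funext fun e => ?_)
    simp [sub_sub]

theorem shift_apply (v : Multiplicative (ℤ × ℤ)) (f : Flow) (e : (ℤ × ℤ) × Fin 2) :
    (shift v f).toAdd e = f.toAdd (e.1 - v.toAdd, e.2) := rfl

theorem shift_symm_apply (v : Multiplicative (ℤ × ℤ)) (f : Flow) (e : (ℤ × ℤ) × Fin 2) :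
    ((shift v).symm f).toAdd e = f.toAdd (e.1 + v.toAdd, e.2) := rfl

/-- The Magnus embedding of the free metabelian group, as a homomorphism on the free group. -/
def magnus : F2 →* Flow ⋊[shift] Multiplicative (ℤ × ℤ) :=
  FreeGroup.lift fun i =>
    ⟨Multiplicative.ofAdd fun e => if e = (0, i) then 1 else 0, Multiplicative.ofAdd (vec i)⟩

theorem trav_translate (w : List (Fin 2 × Bool)) (p q : ℤ × ℤ) (e : (ℤ × ℤ) × Fin 2) :
    trav w (p + q) e = trav w q (e.1 - p, e.2) := by
  induction w generalizing q with
  | nil => rfl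
  | cons l w ih =>
    have h : ∀ r : ℤ × ℤ, (e = (p + r, l.1)) ↔ ((e.1 - p, e.2) = (r, l.1)) := by
      intro r
      simp only [Prod.ext_iff (x := e), Prod.mk.injEq, sub_eq_iff_eq_add']
    rw [trav, trav, add_assoc, ih]
    congr 1
    cases l.2 <;> simp only [if_true, if_false, h, Bool.false_eq_true]

theorem endpt_cons (l : Fin 2 × Bool) (w : List (Fin 2 × Bool)) :
    endpt (l :: w) = disp l + endpt w := by
  simp [endpt]

theorem mk_cons (l : Fin 2 × Bool) (w : List (Fin 2 × Bool)) :
    (FreeGroup.mk (l :: w) : F2) = FreeGroup.mk [l] * FreeGroup.mk w := by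
  simp [FreeGroup.mul_mk]

theorem mk_singleton_true (i : Fin 2) : (FreeGroup.mk [(i, true)] : F2) = FreeGroup.of i := rfl

theorem mk_singleton_false (i : Fin 2) :
    (FreeGroup.mk [(i, false)] : F2) = (FreeGroup.of i)⁻¹ := by
  simp [FreeGroup.of, FreeGroup.inv_mk, FreeGroup.invRev]

theorem magnus_letter (l : Fin 2 × Bool) :
    magnus (FreeGroup.mk [l]) =
      ⟨Multiplicative.ofAdd fun e => trav [l] 0 e, Multiplicative.ofAdd (disp l)⟩ := by
  obtain ⟨i, b⟩ := l
  cases b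
  · rw [mk_singleton_false, map_inv]
    apply SemidirectProduct.ext
    · apply Multiplicative.toAdd.injective
      funext e
      have h : (e.1 + vec i, e.2) = ((0 : ℤ × ℤ), i) ↔ e = (-vec i, i) := by
        simp only [Prod.ext_iff (x := e), Prod.mk.injEq, add_eq_zero_iff_eq_neg]
      simp [magnus, trav, shift_symm_apply, disp, h, apply_ite Neg.neg]
    · simp [magnus, disp]
  · rw [mk_singleton_true]
    simp [magnus, trav, disp]

theorem magnus_mk (w : List (Fin 2 × Bool)) :
    magnus (FreeGroup.mk w) =
      ⟨Multiplicative.ofAdd fun e => trav w 0 e, Multiplicative.ofAdd (endpt w)⟩ := by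
  induction w with
  | nil => exact map_one magnus
  | cons l w ih =>
    rw [mk_cons, map_mul, ih, magnus_letter]
    apply SemidirectProduct.ext
    · apply Multiplicative.toAdd.injective
      funext e
      have h := trav_translate w (disp l) 0 e
      rw [add_zero] at h
      simp [trav, shift_apply, h]
    · simp [endpt_cons]

theorem second_derived_le_ker_magnus :
    (⁅commutator F2, commutator F2⁆ : Subgroup F2) ≤ magnus.ker := by
  have hr : ∀ g ∈ commutator F2, (magnus g).right = 1 := fun g hg =>
    MonoidHom.mem_ker.1
      (Abelianization.commutator_subset_ker (SemidirectProduct.rightHom.comp magnus) hg)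
  rw [Subgroup.commutator_le]
  intro a ha b hb
  rw [MonoidHom.mem_ker, map_commutatorElement, commutatorElement_eq_one_iff_mul_comm]
  apply SemidirectProduct.ext
  · simp [hr a ha, hr b hb, mul_comm]
  · simp [hr a ha, hr b hb]

/-- The standard representative `x ^ a * y ^ b` of the coset of the derived subgroup
corresponding to the lattice point `(a, b)`. -/
def transversal (v : ℤ × ℤ) : F2 := FreeGroup.of 0 ^ v.1 * FreeGroup.of 1 ^ v.2

theorem transversal_zero : transversal 0 = 1 := by
  simp [transversal]

theorem edge_mem (p : ℤ × ℤ) (i : Fin 2) :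
    transversal p * FreeGroup.of i * (transversal (p + vec i))⁻¹ ∈ commutator F2 := by
  rw [← Abelianization.ker_of, MonoidHom.mem_ker]
  fin_cases i
  · simp only [transversal, vec, map_mul, map_zpow, map_inv, Prod.fst_add, Prod.snd_add,
      zpow_add, Fin.zero_eta, if_true, add_zero, zpow_one]
    rw [mul_inv_eq_one]
    ac_rfl
  · simp only [transversal, vec, map_mul, map_zpow, map_inv, Prod.fst_add, Prod.snd_add,
      zpow_add, Fin.mk_one, one_ne_zero, if_false, add_zero, zpow_one]
    rw [mul_inv_eq_one]
    ac_rfl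

/-- The class in the abelianized derived subgroup of the loop that runs along an edge, closed up
using standard representatives. -/
def edgeClass (e : (ℤ × ℤ) × Fin 2) : Additive (Abelianization (commutator F2)) :=
  Additive.ofMul (Abelianization.of ⟨_, edge_mem e.1 e.2⟩)

/-- The net traversal counts of a path, as a finitely supported function. -/
noncomputable def travFinsupp : List (Fin 2 × Bool) → ℤ × ℤ → (ℤ × ℤ) × Fin 2 →₀ ℤ
  | [], _ => 0
  | l :: w, p =>
      Finsupp.single ((if l.2 then p else p + disp l), l.1) (if l.2 then (1 : ℤ) else -1)
        + travFinsupp w (p + disp l)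

theorem travFinsupp_apply (w : List (Fin 2 × Bool)) (p : ℤ × ℤ) (e : (ℤ × ℤ) × Fin 2) :
    travFinsupp w p e = trav w p e := by
  induction w generalizing p with
  | nil => rfl
  | cons l w ih =>
    rw [travFinsupp, trav, Finsupp.add_apply, ih, Finsupp.single_apply]
    simp only [eq_comm]

/-- The loop class of a flow. -/
noncomputable def flowClass :
    ((ℤ × ℤ) × Fin 2 →₀ ℤ) →+ Additive (Abelianization (commutator F2)) :=
  (Finsupp.linearCombination ℤ edgeClass).toAddMonoidHom

theorem flowClass_single (e : (ℤ × ℤ) × Fin 2) (n : ℤ) :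
    flowClass (Finsupp.single e n) = n • edgeClass e :=
  Finsupp.linearCombination_single ℤ n e

theorem exists_letter_class (l : Fin 2 × Bool) (p : ℤ × ℤ) :
    ∃ c : commutator F2,
      (c : F2) = transversal p * FreeGroup.mk [l] * (transversal (p + disp l))⁻¹ ∧
        Additive.ofMul (Abelianization.of c) = flowClass (Finsupp.single
          ((if l.2 then p else p + disp l), l.1) (if l.2 then (1 : ℤ) else -1)) := by
  obtain ⟨i, b⟩ := l
  cases b
  · refine ⟨⟨_, edge_mem (p + disp (i, false)) i⟩⁻¹, ?_, ?_⟩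
    · rw [mk_singleton_false]
      simp [disp, mul_assoc]
    · simp [flowClass_single, edgeClass]
  · refine ⟨⟨_, edge_mem p i⟩, ?_, ?_⟩
    · rw [mk_singleton_true]
      simp [disp]
    · simp [flowClass_single, edgeClass]

theorem exists_path_class (w : List (Fin 2 × Bool)) (p : ℤ × ℤ) :
    ∃ c : commutator F2,
      (c : F2) = transversal p * FreeGroup.mk w * (transversal (p + endpt w))⁻¹ ∧
        Additive.ofMul (Abelianization.of c) = flowClass (travFinsupp w p) := by
  induction w generalizing p with
  | nil => exact ⟨1, by simp [endpt, ← FreeGroup.one_eq_mk], by simp [travFinsupp]⟩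
  | cons l w ih =>
    obtain ⟨c, hc, hc'⟩ := exists_letter_class l p
    obtain ⟨d, hd, hd'⟩ := ih (p + disp l)
    refine ⟨c * d, ?_, ?_⟩
    · rw [Subgroup.coe_mul, hc, hd, mk_cons l w, endpt_cons, add_assoc]
      group
    · rw [travFinsupp, map_add, map_mul, ofMul_mul, hc', hd']

theorem mem_second_derived {w : List (Fin 2 × Bool)} (hw : endpt w = 0)
    (ht : ∀ e, trav w 0 e = 0) :
    (FreeGroup.mk w : F2) ∈ (⁅commutator F2, commutator F2⁆ : Subgroup F2) := by
  obtain ⟨c, hc, hc'⟩ := exists_path_class w 0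
  have h0 : travFinsupp w 0 = 0 := Finsupp.ext fun e => by rw [travFinsupp_apply, ht]; rfl
  rw [h0, map_zero, ofMul_eq_zero, ← MonoidHom.mem_ker, Abelianization.ker_of] at hc'
  have hm := Subgroup.mem_map_of_mem (commutator F2).subtype hc'
  rw [commutator_def (commutator F2), Subgroup.map_commutator, ← MonoidHom.range_eq_map,
    Subgroup.range_subtype] at hm
  simpa [hc, hw, transversal_zero] using hm

/-- A word `w` over `{x,x⁻¹,y,y⁻¹}` represents the identity of the free
metabelian group of rank 2 if and only if the path it traces in the Cayley
graph of `ℤ × ℤ` from the origin is closed and traverses every edge a net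
total of zero times. -/
theorem stmt15 (w : List (Fin 2 × Bool)) :
    (QuotientGroup.mk (FreeGroup.mk w) : M2) = 1 ↔
      (endpt w = 0 ∧ ∀ e : (ℤ × ℤ) × Fin 2, trav w 0 e = 0) := by
  rw [QuotientGroup.eq_one_iff]
  refine ⟨fun h => ?_, fun h => mem_second_derived h.1 h.2⟩
  have hk := MonoidHom.mem_ker.1 (second_derived_le_ker_magnus h)
  rw [magnus_mk] at hk
  exact ⟨congrArg (fun g => g.right.toAdd) hk, fun e => congrArg (fun g => g.left.toAdd e) hk⟩

end Stmt15
end
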